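/- arXiv:0907.1792 — 2 statements merged into one kernel-verified Lean document; each statement's English description precedes it below -/
import Mathlib

section
/- Let g : ℝ → ℂ be a measurable function admitting an extension g̃ : {ω ∈ ℂ : Im ω ≥ 0} → ℂ such that (i) g̃ is analytic on the open upper half-plane {ω : Im ω > 0}; (ii) |g̃(ω)| ≤ 1 for all ω with Im ω ≥ 0; (iii) lim_{b→0+} g̃(a+ib) = g(a) for Lebesgue-almost all a ∈ ℝ. Then for every φ ∈ L²(ℝ), ∫_{[0,∞)} |(F*(g·φ))(y)|² dy ≤ ∫_{[0,∞)} |(F*φ)(y)|² dy, i.e. the operator inequality g(M)* P̂₊ g(M) ≤ P̂₊ holds, where M is multiplication by the variable, P̂₊ = F χ_{[0,∞)}(M) F*, and g·φ denotes the pointwise product. -/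
open MeasureTheory Complex Filter Set

noncomputable section

/-- `L²(ℝ)` with respect to Lebesgue measure. -/
abbrev H2 : Type := Lp ℂ 2 (volume : Measure ℝ)

/-- `𝓕` is the Fourier–Plancherel operator: a unitary on `L²(ℝ)` which is given on
`L¹ ∩ L²` by the usual integral formula `(𝓕φ)(y) = (2π)^{-1/2} ∫ e^{-iyx} φ(x) dx`, and whose
inverse `𝓕* = 𝓕⁻¹` is given on `L¹ ∩ L²` by `(𝓕*φ)(y) = (2π)^{-1/2} ∫ e^{iyx} φ(x) dx`. -/
def IsFourier (𝓕 : H2 ≃ₗᵢ[ℂ] H2) : Prop :=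
  (∀ φ : H2, Integrable (⇑φ) volume →
      (⇑(𝓕 φ) : ℝ → ℂ) =ᵐ[volume]
        fun y : ℝ => (Real.sqrt (2 * Real.pi) : ℂ)⁻¹ *
          ∫ x : ℝ, Complex.exp (-(Complex.I * y * x)) * φ x) ∧
  (∀ φ : H2, Integrable (⇑φ) volume →
      (⇑(𝓕.symm φ) : ℝ → ℂ) =ᵐ[volume]
        fun y : ℝ => (Real.sqrt (2 * Real.pi) : ℂ)⁻¹ *
          ∫ x : ℝ, Complex.exp (Complex.I * y * x) * φ x)

/-- The multiplication operator `g(M)` on `L²`: `φ ↦ g·φ` (pointwise product), defined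
whenever the product is again in `L²`. -/
def mulLp {μ : Measure ℝ} (g : ℝ → ℂ) (φ : Lp ℂ 2 μ) : Lp ℂ 2 μ := by
  classical exact if h : MemLp (fun x => g x * φ x) 2 μ then h.toLp _ else 0

/-- `gt` is an extension of `g : ℝ → ℂ` to the closed upper half-plane which is analytic on the
open upper half-plane, bounded by one there, and has non-tangential boundary values `g` a.e. -/
structure HardyExt (g : ℝ → ℂ) (gt : ℂ → ℂ) : Prop where
  agree : ∀ a : ℝ, gt (a : ℂ) = g a
  analytic : DifferentiableOn ℂ gt {ω : ℂ | 0 < ω.im}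
  bounded : ∀ ω : ℂ, 0 ≤ ω.im → ‖gt ω‖ ≤ 1
  boundary : ∀ᵐ a : ℝ ∂volume,
    Tendsto (fun b : ℝ => gt ((a : ℂ) + b * Complex.I)) (nhdsWithin 0 (Ioi 0)) (nhds (g a))

/-!
Write `S = F* g(M) F`, a contraction, and `χ₊`, `χ₋` for the projections onto `L²(0, ∞)` and
`L²(-∞, 0]`. The claim is `‖χ₊ S ψ‖ ≤ ‖χ₊ ψ‖` for `ψ = F* φ`, which follows from `χ₊ S χ₋ = 0`,
because then `χ₊ S ψ = χ₊ S χ₊ ψ`. The exponentials `exp ((σ + i s) y)`, `s ∈ ℝ`, truncated to the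
half-line on which they decay, are total there by injectivity of `F`, and `F` maps them to multiples
of Cauchy kernels. The matrix elements of `χ₊ S χ₋` between them are therefore multiples of
`∫ g(x) / ((a - i x) (b - i x)) dx` with `Re a, Re b > 0`. The integrand is the boundary value of a
function holomorphic on the upper half-plane and of size `O(|z|⁻²)` there, so the integral vanishes
by Cauchy's theorem.
-/

section CauchyUpperHalfPlane

variable {E : Type*} [NormedAddCommGroup E] {f : ℂ → E} {C b R : ℝ}

lemma integrable_mul_inv_one_add_sq (C : ℝ) : Integrable fun x : ℝ => C * (1 + x ^ 2)⁻¹ :=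
  integrable_inv_one_add_sq.const_mul C

lemma le_mul_inv_one_add_sq_of_abs_le {v r ρ : ℝ} (hv : 0 ≤ v) (h : v ≤ C * (1 + ρ ^ 2)⁻¹)
    (hr : |r| ≤ |ρ|) : v ≤ C * (1 + r ^ 2)⁻¹ := by
  have hC : 0 ≤ C := nonneg_of_mul_nonneg_left (hv.trans h) (by positivity)
  have hsq : r ^ 2 ≤ ρ ^ 2 := sq_le_sq.2 hr
  exact h.trans (by gcongr)

lemma norm_add_mul_I_le (hC : ∀ z : ℂ, 0 < z.im → ‖f z‖ ≤ C * (1 + ‖z‖ ^ 2)⁻¹)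
    (hb : 0 < b) (x : ℝ) : ‖f (x + b * I)‖ ≤ C * (1 + x ^ 2)⁻¹ := by
  refine le_mul_inv_one_add_sq_of_abs_le (norm_nonneg _) (hC _ (by simpa using hb)) ?_
  simpa using abs_re_le_norm ((x : ℂ) + b * I)

variable [NormedSpace ℂ E]

lemma continuous_add_mul_I (hf : DifferentiableOn ℂ f {z | 0 < z.im}) (hb : 0 < b) :
    Continuous fun x : ℝ => f (x + b * I) :=
  hf.continuousOn.comp_continuous (by fun_prop) fun x => by simpa using hb

lemma norm_intervalIntegral_add_mul_I_le {M : ℝ} (hf : DifferentiableOn ℂ f {z | b ≤ z.im})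
    (hM : ∀ z : ℂ, b ≤ z.im → R ≤ ‖z‖ → ‖f z‖ ≤ M) (hb : 0 ≤ b) (hR : 0 ≤ R) :
    ‖∫ x in (-R)..R, f (x + b * I)‖ ≤ 4 * R * M := by
  have top : ‖∫ x in (-R)..R, f (x + (b + R : ℝ) * I)‖ ≤ M * |R - -R| := by
    refine intervalIntegral.norm_integral_le_of_norm_le_const fun x _ => hM _ (by simpa) ?_
    calc R ≤ ((x : ℂ) + (b + R : ℝ) * I).im := by simpa
      _ ≤ ‖(x : ℂ) + (b + R : ℝ) * I‖ := im_le_norm _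
  have side : ∀ r : ℝ, |r| = R → ‖∫ y in b..(b + R), f (r + y * I)‖ ≤ M * |b + R - b| := by
    refine fun r hr => intervalIntegral.norm_integral_le_of_norm_le_const fun y hy => hM _ ?_ ?_
    · rw [uIoc_of_le (by linarith)] at hy
      simpa using hy.1.le
    · simpa [hr] using abs_re_le_norm ((r : ℂ) + y * I)
  have rect := integral_boundary_rect_eq_zero_of_differentiableOn f ⟨-R, b⟩ ⟨R, b + R⟩ <|
    hf.mono fun z hz => (uIcc_of_le (le_add_of_nonneg_right hR) ▸ hz.2 : z.im ∈ Icc b (b + R)).1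
  have bottom_eq : ∫ x in (-R)..R, f (x + b * I) =
      (∫ x in (-R)..R, f (x + (b + R : ℝ) * I)) - I • (∫ y in b..(b + R), f (R + y * I)) +
        I • ∫ y in b..(b + R), f ((-R : ℝ) + y * I) := by
    rw [← sub_eq_zero, ← rect]
    abel
  calc ‖∫ x in (-R)..R, f (x + b * I)‖ ≤ M * |R - -R| + M * |b + R - b| + M * |b + R - b| := by
        rw [bottom_eq]
        refine norm_add_le_of_le (norm_sub_le_of_le top ?_) ?_
        · simpa [norm_smul] using side R (abs_of_nonneg hR)
        · simpa [norm_smul] using side (-R) (by rw [abs_neg, abs_of_nonneg hR])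
    _ = 4 * R * M := by
        rw [sub_neg_eq_add, add_sub_cancel_left, abs_of_nonneg hR, abs_of_nonneg (by positivity)]
        ring

lemma norm_intervalIntegral_add_mul_I_le_div (hf : DifferentiableOn ℂ f {z | 0 < z.im})
    (hC : ∀ z : ℂ, 0 < z.im → ‖f z‖ ≤ C * (1 + ‖z‖ ^ 2)⁻¹) (hb : 0 < b) (hR : 0 < R) :
    ‖∫ x in (-R)..R, f (x + b * I)‖ ≤ 4 * C / R := by
  have hC0 : 0 ≤ C :=
    nonneg_of_mul_nonneg_left ((norm_nonneg _).trans (hC I (by simp))) (by positivity)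
  calc ‖∫ x in (-R)..R, f (x + b * I)‖ ≤ 4 * R * (C * (1 + R ^ 2)⁻¹) :=
        norm_intervalIntegral_add_mul_I_le (hf.mono fun z => hb.trans_le)
          (fun z hz hRz => le_mul_inv_one_add_sq_of_abs_le (norm_nonneg _) (hC z (hb.trans_le hz))
            (abs_le_abs_of_nonneg hR.le hRz)) hb.le hR.le
    _ ≤ 4 * R * (C * (R ^ 2)⁻¹) := by gcongr; linarith
    _ = 4 * C / R := by field_simp

theorem integral_add_mul_I_eq_zero (hf : DifferentiableOn ℂ f {z | 0 < z.im})
    (hC : ∀ z : ℂ, 0 < z.im → ‖f z‖ ≤ C * (1 + ‖z‖ ^ 2)⁻¹) (hb : 0 < b) :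
    ∫ x : ℝ, f (x + b * I) = 0 := by
  have hint : Integrable fun x : ℝ => f (x + b * I) :=
    (integrable_mul_inv_one_add_sq C).mono' (continuous_add_mul_I hf hb).aestronglyMeasurable
      (.of_forall (norm_add_mul_I_le hC hb))
  refine tendsto_nhds_unique
    (intervalIntegral_tendsto_integral hint tendsto_neg_atTop_atBot tendsto_id)
    (squeeze_zero_norm' ?_ (tendsto_const_nhds (x := 4 * C) |>.div_atTop tendsto_id))
  filter_upwards [eventually_gt_atTop 0] with R hR
  exact norm_intervalIntegral_add_mul_I_le_div hf hC hb hR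

theorem integral_boundaryValue_eq_zero {f₀ : ℝ → E} (hf : DifferentiableOn ℂ f {z | 0 < z.im})
    (hC : ∀ z : ℂ, 0 < z.im → ‖f z‖ ≤ C * (1 + ‖z‖ ^ 2)⁻¹)
    (hf₀ : ∀ᵐ x : ℝ, Tendsto (fun b : ℝ => f (x + b * I)) (nhdsWithin 0 (Ioi 0)) (nhds (f₀ x))) :
    ∫ x, f₀ x = 0 := by
  have hlim : Tendsto (fun b : ℝ => ∫ x : ℝ, f (x + b * I)) (nhdsWithin 0 (Ioi 0))
      (nhds (∫ x, f₀ x)) := by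
    refine tendsto_integral_filter_of_dominated_convergence _ ?_ ?_
      (integrable_mul_inv_one_add_sq C) hf₀
    · filter_upwards [self_mem_nhdsWithin] with b hb
      exact (continuous_add_mul_I hf hb).aestronglyMeasurable
    · filter_upwards [self_mem_nhdsWithin] with b hb
      exact .of_forall (norm_add_mul_I_le hC hb)
  refine tendsto_nhds_unique hlim (tendsto_const_nhds.congr' ?_)
  filter_upwards [self_mem_nhdsWithin] with b hb
  exact (integral_add_mul_I_eq_zero hf hC hb).symm

end CauchyUpperHalfPlane

section CauchyKernel

variable {a b z : ℂ}

lemma re_le_norm_sub_I_mul (hz : 0 ≤ z.im) : a.re ≤ ‖a - I * z‖ := by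
  refine le_trans ?_ (re_le_norm _)
  simpa using hz

lemma sub_I_mul_ne_zero (ha : 0 < a.re) (hz : 0 ≤ z.im) : a - I * z ≠ 0 :=
  norm_pos_iff.1 (ha.trans_le (re_le_norm_sub_I_mul hz))

lemma one_add_norm_le_mul_norm_sub_I_mul (ha : 0 < a.re) (hz : 0 ≤ z.im) :
    1 + ‖z‖ ≤ ((1 + ‖a‖) / a.re + 1) * ‖a - I * z‖ := by
  have hre : 1 ≤ ‖a - I * z‖ / a.re := (one_le_div ha).2 (re_le_norm_sub_I_mul hz)
  have hnorm : ‖z‖ ≤ ‖a‖ + ‖a - I * z‖ := by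
    simpa using norm_sub_le a (a - I * z)
  calc 1 + ‖z‖ ≤ (1 + ‖a‖) * 1 + ‖a - I * z‖ := by linarith
    _ ≤ (1 + ‖a‖) * (‖a - I * z‖ / a.re) + ‖a - I * z‖ := by gcongr
    _ = ((1 + ‖a‖) / a.re + 1) * ‖a - I * z‖ := by ring

lemma norm_inv_sub_I_mul_le (ha : 0 < a.re) (hz : 0 ≤ z.im) :
    ‖(a - I * z)⁻¹‖ ≤ ((1 + ‖a‖) / a.re + 1) * (1 + ‖z‖)⁻¹ := by
  have hpos : 0 < ‖a - I * z‖ := norm_pos_iff.2 (sub_I_mul_ne_zero ha hz)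
  rw [norm_inv, ← div_eq_mul_inv, inv_le_iff_one_le_mul₀ hpos, div_mul_eq_mul_div,
    one_le_div (by positivity)]
  exact one_add_norm_le_mul_norm_sub_I_mul ha hz

lemma exists_norm_mul_inv_mul_inv_le (ha : 0 < a.re) (hb : 0 < b.re) :
    ∃ C, ∀ w z : ℂ, ‖w‖ ≤ 1 → 0 ≤ z.im →
      ‖w * ((a - I * z)⁻¹ * (b - I * z)⁻¹)‖ ≤ C * (1 + ‖z‖ ^ 2)⁻¹ := by
  refine ⟨((1 + ‖a‖) / a.re + 1) * ((1 + ‖b‖) / b.re + 1), fun w z hw hz => ?_⟩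
  have hsq : ((1 + ‖z‖) ^ 2)⁻¹ ≤ (1 + ‖z‖ ^ 2)⁻¹ := by
    gcongr
    nlinarith [norm_nonneg z]
  calc ‖w * ((a - I * z)⁻¹ * (b - I * z)⁻¹)‖
      ≤ 1 * (((1 + ‖a‖) / a.re + 1) * (1 + ‖z‖)⁻¹ * (((1 + ‖b‖) / b.re + 1) * (1 + ‖z‖)⁻¹)) := by
        rw [norm_mul, norm_mul]
        gcongr
        · exact norm_inv_sub_I_mul_le ha hz
        · exact norm_inv_sub_I_mul_le hb hz
    _ = ((1 + ‖a‖) / a.re + 1) * ((1 + ‖b‖) / b.re + 1) * ((1 + ‖z‖) ^ 2)⁻¹ := by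
        rw [sq, mul_inv]
        ring
    _ ≤ _ := by gcongr

lemma differentiableAt_inv_sub_I_mul (ha : 0 < a.re) (hz : 0 ≤ z.im) :
    DifferentiableAt ℂ (fun z => (a - I * z)⁻¹) z :=
  DifferentiableAt.inv (by fun_prop) (sub_I_mul_ne_zero ha hz)

theorem HardyExt.integral_mul_inv_mul_inv_eq_zero {g : ℝ → ℂ} {gt : ℂ → ℂ} (hgt : HardyExt g gt)
    (ha : 0 < a.re) (hb : 0 < b.re) :
    ∫ x : ℝ, g x * ((a - I * x)⁻¹ * (b - I * x)⁻¹) = 0 := by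
  obtain ⟨C, hC⟩ := exists_norm_mul_inv_mul_inv_le ha hb
  have hkernel {z : ℂ} (hz : 0 ≤ z.im) :
      DifferentiableAt ℂ (fun z => (a - I * z)⁻¹ * (b - I * z)⁻¹) z :=
    (differentiableAt_inv_sub_I_mul ha hz).mul (differentiableAt_inv_sub_I_mul hb hz)
  refine integral_boundaryValue_eq_zero
    (f := fun z => gt z * ((a - I * z)⁻¹ * (b - I * z)⁻¹))
    (hgt.analytic.mul fun z hz => (hkernel (le_of_lt hz)).differentiableWithinAt)
    (fun z hz => hC _ _ (hgt.bounded z hz.le) hz.le) ?_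
  have hvert (x : ℝ) :
      Tendsto (fun b : ℝ => (x : ℂ) + b * I) (nhdsWithin 0 (Ioi 0)) (nhds x) := by
    have hcont : Continuous fun b : ℝ => (x : ℂ) + b * I := by fun_prop
    simpa using (hcont.tendsto 0).mono_left nhdsWithin_le_nhds
  filter_upwards [hgt.boundary] with x hx
  exact hx.mul ((hkernel (z := x) (by simp)).continuousAt.tendsto.comp (hvert x))

end CauchyKernel

section MultiplicationOperator

open scoped ENNReal

variable {μ : Measure ℝ} {g : ℝ → ℂ} {A : Set ℝ}

lemma coeFn_mulLp (hg : MemLp g ∞ μ) (φ : Lp ℂ 2 μ) : mulLp g φ =ᵐ[μ] fun x => g x * φ x := by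
  have hmem : MemLp (fun x => g x * φ x) 2 μ := (Lp.memLp φ).mul' hg
  rw [mulLp, dif_pos hmem]
  exact hmem.coeFn_toLp

lemma mulLp_add (hg : MemLp g ∞ μ) (φ ψ : Lp ℂ 2 μ) :
    mulLp g (φ + ψ) = mulLp g φ + mulLp g ψ := by
  apply Lp.ext
  filter_upwards [coeFn_mulLp hg (φ + ψ), Lp.coeFn_add φ ψ, Lp.coeFn_add (mulLp g φ) (mulLp g ψ),
    coeFn_mulLp hg φ, coeFn_mulLp hg ψ] with x hsum hadd hadd' hφ hψ
  rw [hsum, hadd, hadd', Pi.add_apply, Pi.add_apply, hφ, hψ, mul_add]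

lemma norm_mulLp_le (hg : MemLp g ∞ μ) (hg1 : ∀ x, ‖g x‖ ≤ 1) (φ : Lp ℂ 2 μ) :
    ‖mulLp g φ‖ ≤ ‖φ‖ := by
  apply Lp.norm_le_norm_of_ae_le
  filter_upwards [coeFn_mulLp hg φ] with x hx
  rw [hx, norm_mul]
  exact mul_le_of_le_one_left (norm_nonneg _) (hg1 x)

lemma inner_mulLp_right (hg : MemLp g ∞ μ) (φ ψ : Lp ℂ 2 μ) :
    inner ℂ φ (mulLp g ψ) = inner ℂ (mulLp (star g) φ) ψ := by
  rw [L2.inner_def, L2.inner_def]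
  apply integral_congr_ae
  filter_upwards [coeFn_mulLp hg ψ, coeFn_mulLp hg.star φ] with x hψ hφ
  rw [hψ, hφ, RCLike.inner_apply', RCLike.inner_apply', Pi.star_apply, map_mul, star_def, conj_conj]
  ring

/-- The spectral projection `χ_A(M)`: multiplication by the characteristic function of `A`. -/
def cutoff (A : Set ℝ) (φ : Lp ℂ 2 μ) : Lp ℂ 2 μ := mulLp (A.indicator 1) φ

lemma memLp_top_indicator_one (hA : MeasurableSet A) : MemLp (A.indicator (1 : ℝ → ℂ)) ∞ μ :=
  memLp_top_const 1 |>.indicator hA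

lemma coeFn_cutoff (hA : MeasurableSet A) (φ : Lp ℂ 2 μ) : cutoff A φ =ᵐ[μ] A.indicator φ := by
  filter_upwards [coeFn_mulLp (memLp_top_indicator_one hA) φ] with x hx
  rw [cutoff, hx]
  by_cases hxA : x ∈ A <;> simp [hxA]

lemma cutoff_add (hA : MeasurableSet A) (φ ψ : Lp ℂ 2 μ) :
    cutoff A (φ + ψ) = cutoff A φ + cutoff A ψ :=
  mulLp_add (memLp_top_indicator_one hA) φ ψ

lemma cutoff_add_cutoff_compl (hA : MeasurableSet A) (φ : Lp ℂ 2 μ) :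
    cutoff A φ + cutoff Aᶜ φ = φ := by
  apply Lp.ext
  filter_upwards [Lp.coeFn_add (cutoff A φ) (cutoff Aᶜ φ), coeFn_cutoff hA φ,
    coeFn_cutoff hA.compl φ] with x hadd hφ hφ'
  rw [hadd, Pi.add_apply, hφ, hφ', indicator_self_add_compl_apply]

lemma inner_cutoff_right (hA : MeasurableSet A) (φ ψ : Lp ℂ 2 μ) :
    inner ℂ φ (cutoff A ψ) = inner ℂ (cutoff A φ) ψ := by
  have hreal : star (A.indicator (1 : ℝ → ℂ)) = A.indicator 1 := by
    ext x
    by_cases hx : x ∈ A <;> simp [hx]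
  rw [cutoff, inner_mulLp_right (memLp_top_indicator_one hA), hreal, cutoff]

lemma norm_cutoff_le (hA : MeasurableSet A) (φ : Lp ℂ 2 μ) : ‖cutoff A φ‖ ≤ ‖φ‖ :=
  norm_mulLp_le (memLp_top_indicator_one hA)
    (fun x => (norm_indicator_le_norm_self _ x).trans (by simp)) φ

lemma norm_cutoff_sq (hA : MeasurableSet A) (φ : Lp ℂ 2 μ) :
    ‖cutoff A φ‖ ^ 2 = ∫ x in A, ‖φ x‖ ^ 2 ∂μ := by
  rw [← inner_self_eq_norm_sq (𝕜 := ℂ), L2.inner_def, ← integral_re (L2.integrable_inner _ _),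
    ← integral_indicator hA]
  apply integral_congr_ae
  filter_upwards [coeFn_cutoff hA φ] with x hx
  rw [inner_self_eq_norm_sq, hx]
  by_cases hxA : x ∈ A <;> simp [hxA]

end MultiplicationOperator

namespace IsFourier

variable {𝓕 : H2 ≃ₗᵢ[ℂ] H2} {f : ℝ → ℂ}

lemma coeFn_toLp (h𝓕 : IsFourier 𝓕) (hf : MemLp f 2) (hint : Integrable f) :
    𝓕 (hf.toLp f) =ᵐ[volume] fun x : ℝ =>
      (Real.sqrt (2 * Real.pi) : ℂ)⁻¹ * ∫ y : ℝ, exp (-(I * x * y)) * f y := by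
  filter_upwards [h𝓕.1 (hf.toLp f) (hint.congr hf.coeFn_toLp.symm)] with x hx
  rw [hx]
  congr 1
  apply integral_congr_ae
  filter_upwards [hf.coeFn_toLp] with y hy
  rw [hy]

lemma ae_eq_zero_of_forall_integral_eq_zero (h𝓕 : IsFourier 𝓕) (hf : MemLp f 2)
    (hint : Integrable f) (h : ∀ x : ℝ, ∫ y : ℝ, exp (-(I * x * y)) * f y = 0) :
    f =ᵐ[volume] 0 := by
  have htransform : 𝓕 (hf.toLp f) = 0 := by
    rw [Lp.eq_zero_iff_ae_eq_zero]
    filter_upwards [h𝓕.coeFn_toLp hf hint] with x hx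
    rw [hx, h x, mul_zero, Pi.zero_apply]
  rw [map_eq_zero_iff 𝓕 𝓕.injective, Lp.eq_zero_iff_ae_eq_zero] at htransform
  exact hf.coeFn_toLp.symm.trans htransform

end IsFourier

/-- The exponential `y ↦ exp (σ y)` is integrable on `A` and bounded there by one: the situation
on a half-line `A` for `σ` of the appropriate sign. -/
structure ExpDecaysOn (A : Set ℝ) (σ : ℝ) : Prop where
  measurableSet : MeasurableSet A
  integrableOn : IntegrableOn (fun y => Real.exp (σ * y)) A
  mul_nonpos : ∀ y ∈ A, σ * y ≤ 0

namespace ExpDecaysOn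

variable {A : Set ℝ} {σ : ℝ}

lemma of_pos (hσ : 0 < σ) : ExpDecaysOn (Iic 0) σ where
  measurableSet := measurableSet_Iic
  integrableOn := integrableOn_exp_mul_Iic hσ 0
  mul_nonpos _ := mul_nonpos_of_nonneg_of_nonpos hσ.le

lemma of_neg (hσ : σ < 0) : ExpDecaysOn (Ioi 0) σ where
  measurableSet := measurableSet_Ioi
  integrableOn := integrableOn_exp_mul_Ioi hσ 0
  mul_nonpos _ hy := mul_nonpos_of_nonpos_of_nonneg hσ.le (le_of_lt hy)

lemma integrable_indicator (h : ExpDecaysOn A σ) (s : ℝ) :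
    Integrable (A.indicator fun y : ℝ => exp ((σ + s * I) * y)) := by
  rw [integrable_indicator_iff h.measurableSet]
  refine h.integrableOn.mono' (by fun_prop) (.of_forall fun y => ?_)
  simp [norm_exp]

lemma norm_indicator_le_one (h : ExpDecaysOn A σ) (s y : ℝ) :
    ‖A.indicator (fun y : ℝ => exp ((σ + s * I) * y)) y‖ ≤ 1 := by
  by_cases hy : y ∈ A
  · simpa [hy, norm_exp] using h.mul_nonpos y hy
  · simp [hy]

lemma memLp_two (h : ExpDecaysOn A σ) (s : ℝ) :
    MemLp (A.indicator fun y : ℝ => exp ((σ + s * I) * y)) 2 := by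
  have hint := h.integrable_indicator s
  rw [memLp_two_iff_integrable_sq_norm hint.aestronglyMeasurable]
  refine hint.norm.mono' (hint.aestronglyMeasurable.norm.pow 2) (.of_forall fun y => ?_)
  rw [Real.norm_of_nonneg (by positivity)]
  exact pow_le_of_le_one (norm_nonneg _) (h.norm_indicator_le_one s y) two_ne_zero

/-- The function `χ_A(y) exp ((σ + i s) y)` as an element of `L²(ℝ)`. -/
def toLp (h : ExpDecaysOn A σ) (s : ℝ) : H2 := (h.memLp_two s).toLp _

lemma inner_toLp (h : ExpDecaysOn A σ) (s : ℝ) (φ : H2) :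
    inner ℂ (h.toLp s) φ =
      ∫ y : ℝ, exp (-(I * s * y)) * A.indicator (fun y : ℝ => exp (σ * y) * φ y) y := by
  rw [L2.inner_def]
  apply integral_congr_ae
  filter_upwards [(h.memLp_two s).coeFn_toLp] with y hy
  rw [toLp, hy, RCLike.inner_apply']
  by_cases hyA : y ∈ A
  · simp only [indicator_of_mem hyA, ← exp_conj, ← mul_assoc, ← exp_add]
    congr 2
    simp only [map_mul, map_add, conj_ofReal, conj_I, mul_neg]
    ring
  · simp [hyA]

variable {𝓕 : H2 ≃ₗᵢ[ℂ] H2}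

theorem cutoff_eq_zero_of_forall_inner_eq_zero (h : ExpDecaysOn A σ) (h𝓕 : IsFourier 𝓕) {φ : H2}
    (hφ : ∀ s, inner ℂ (h.toLp s) φ = 0) : cutoff A φ = 0 := by
  have hmul : (A.indicator fun y : ℝ => exp (σ * y) * φ y) =
      fun y => A.indicator (fun y : ℝ => exp ((σ + (0 : ℝ) * I) * y)) y * φ y := by
    ext y
    simp [indicator_mul_left]
  have hint : Integrable (A.indicator fun y : ℝ => exp (σ * y) * φ y) := by
    rw [hmul]
    exact (h.memLp_two 0).integrable_mul (Lp.memLp φ)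
  have hmem : MemLp (A.indicator fun y : ℝ => exp (σ * y) * φ y) 2 := by
    rw [hmul]
    exact (Lp.memLp φ).mul' (memLp_top_of_bound (h.memLp_two 0).1 1
      (.of_forall (h.norm_indicator_le_one 0)))
  have hzero := h𝓕.ae_eq_zero_of_forall_integral_eq_zero hmem hint fun s => by
    rw [← h.inner_toLp, hφ]
  rw [Lp.eq_zero_iff_ae_eq_zero]
  filter_upwards [hzero, coeFn_cutoff h.measurableSet φ] with y hy hcut
  rw [hcut]
  by_cases hyA : y ∈ A
  · simpa [hyA] using hy
  · simp [hyA]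

lemma coeFn_fourier_toLp (h : ExpDecaysOn A σ) (h𝓕 : IsFourier 𝓕) (s : ℝ) :
    𝓕 (h.toLp s) =ᵐ[volume] fun x : ℝ =>
      (Real.sqrt (2 * Real.pi) : ℂ)⁻¹ * ∫ y in A, exp ((σ + s * I - I * x) * y) := by
  filter_upwards [h𝓕.coeFn_toLp (h.memLp_two s) (h.integrable_indicator s)] with x hx
  rw [toLp, hx, ← integral_indicator h.measurableSet]
  congr 2
  ext y
  by_cases hy : y ∈ A
  · simp only [indicator_of_mem hy, ← exp_add]
    ring_nf
  · simp [hy]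

lemma coeFn_fourier_toLp_of_pos (hσ : 0 < σ) (h𝓕 : IsFourier 𝓕) (s : ℝ) :
    𝓕 ((of_pos hσ).toLp s) =ᵐ[volume] fun x : ℝ =>
      (Real.sqrt (2 * Real.pi) : ℂ)⁻¹ * (σ + s * I - I * x)⁻¹ := by
  filter_upwards [(of_pos hσ).coeFn_fourier_toLp h𝓕 s] with x hx
  rw [hx, integral_exp_mul_complex_Iic (by simpa using hσ)]
  simp

lemma coeFn_fourier_toLp_of_neg (hσ : σ < 0) (h𝓕 : IsFourier 𝓕) (s : ℝ) :
    𝓕 ((of_neg hσ).toLp s) =ᵐ[volume] fun x : ℝ =>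
      (Real.sqrt (2 * Real.pi) : ℂ)⁻¹ * (-(σ + s * I - I * x))⁻¹ := by
  filter_upwards [(of_neg hσ).coeFn_fourier_toLp h𝓕 s] with x hx
  rw [hx, integral_exp_mul_complex_Ioi (by simpa using hσ), ofReal_zero, mul_zero, exp_zero,
    neg_div, one_div, inv_neg]

end ExpDecaysOn

namespace HardyExt

variable {g : ℝ → ℂ} {gt : ℂ → ℂ} {𝓕 : H2 ≃ₗᵢ[ℂ] H2}

lemma norm_le_one (hgt : HardyExt g gt) (x : ℝ) : ‖g x‖ ≤ 1 :=
  hgt.agree x ▸ hgt.bounded x (by simp)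

lemma memLp_top (hgt : HardyExt g gt) (hg : Measurable g) : MemLp g ⊤ :=
  memLp_top_of_bound hg.aestronglyMeasurable 1 (.of_forall hgt.norm_le_one)

lemma inner_fourier_mulLp_fourier_eq_zero (hgt : HardyExt g gt) (hg : Measurable g)
    (h𝓕 : IsFourier 𝓕) {σ τ : ℝ} (hσ : 0 < σ) (hτ : τ < 0) (s t : ℝ) :
    inner ℂ (𝓕 ((ExpDecaysOn.of_neg hτ).toLp t))
      (mulLp g (𝓕 ((ExpDecaysOn.of_pos hσ).toLp s))) = 0 := by
  set c : ℂ := (Real.sqrt (2 * Real.pi) : ℂ)⁻¹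
  have hc : star c = c := by simp [c]
  calc _ = ∫ x : ℝ, c ^ 2 * (g x * ((-τ + t * I - I * x)⁻¹ * (σ + s * I - I * x)⁻¹)) := by
        rw [L2.inner_def]
        apply integral_congr_ae
        filter_upwards [ExpDecaysOn.coeFn_fourier_toLp_of_neg hτ h𝓕 t,
          ExpDecaysOn.coeFn_fourier_toLp_of_pos hσ h𝓕 s,
          coeFn_mulLp (hgt.memLp_top hg) (𝓕 ((ExpDecaysOn.of_pos hσ).toLp s))]
          with x hright hleft hmul
        have hconj : star (-(τ + t * I - I * x) : ℂ)⁻¹ = (-τ + t * I - I * x)⁻¹ := by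
          simp only [neg_sub, star_inv₀, star_sub, star_mul', star_def, conj_I, conj_ofReal,
            neg_mul, star_add, mul_neg, inv_inj]
          ring
        rw [hmul, hright, hleft, RCLike.inner_apply', ← star_def, star_mul', hc, hconj]
        ring
    _ = 0 := by
        rw [integral_const_mul, hgt.integral_mul_inv_mul_inv_eq_zero (by simpa using hτ)
          (by simpa using hσ), mul_zero]

lemma cutoff_Iic_symm_mulLp_star_fourier_eq_zero (hgt : HardyExt g gt) (hg : Measurable g)
    (h𝓕 : IsFourier 𝓕) {τ : ℝ} (hτ : τ < 0) (t : ℝ) :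
    cutoff (Iic 0) (𝓕.symm (mulLp (star g) (𝓕 ((ExpDecaysOn.of_neg hτ).toLp t)))) = 0 := by
  refine (ExpDecaysOn.of_pos one_pos).cutoff_eq_zero_of_forall_inner_eq_zero h𝓕 fun s => ?_
  rw [← 𝓕.inner_map_eq_flip, inner_eq_zero_symm, ← inner_mulLp_right (hgt.memLp_top hg)]
  exact hgt.inner_fourier_mulLp_fourier_eq_zero hg h𝓕 one_pos hτ s t

theorem cutoff_Ioi_symm_mulLp_fourier_cutoff_Iic (hgt : HardyExt g gt) (hg : Measurable g)
    (h𝓕 : IsFourier 𝓕) (ψ : H2) :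
    cutoff (Ioi 0) (𝓕.symm (mulLp g (𝓕 (cutoff (Iic 0) ψ)))) = 0 := by
  have hneg : (-1 : ℝ) < 0 := by norm_num
  refine (ExpDecaysOn.of_neg hneg).cutoff_eq_zero_of_forall_inner_eq_zero h𝓕 fun t => ?_
  rw [← 𝓕.inner_map_eq_flip, inner_mulLp_right (hgt.memLp_top hg), ← 𝓕.symm_symm,
    ← 𝓕.symm.inner_map_eq_flip, inner_cutoff_right measurableSet_Iic, 𝓕.symm_symm,
    hgt.cutoff_Iic_symm_mulLp_star_fourier_eq_zero hg h𝓕 hneg, inner_zero_left]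

theorem cutoff_Ioi_symm_mulLp_fourier_cutoff_Ioi (hgt : HardyExt g gt) (hg : Measurable g)
    (h𝓕 : IsFourier 𝓕) (ψ : H2) :
    cutoff (Ioi 0) (𝓕.symm (mulLp g (𝓕 (cutoff (Ioi 0) ψ)))) =
      cutoff (Ioi 0) (𝓕.symm (mulLp g (𝓕 ψ))) := by
  conv_rhs => rw [← cutoff_add_cutoff_compl (measurableSet_Ioi (a := (0 : ℝ))) ψ, compl_Ioi]
  rw [map_add, mulLp_add (hgt.memLp_top hg), map_add, cutoff_add measurableSet_Ioi,
    hgt.cutoff_Ioi_symm_mulLp_fourier_cutoff_Iic hg h𝓕, add_zero]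

theorem norm_cutoff_Ioi_symm_mulLp_le (hgt : HardyExt g gt) (hg : Measurable g)
    (h𝓕 : IsFourier 𝓕) (φ : H2) :
    ‖cutoff (Ioi 0) (𝓕.symm (mulLp g φ))‖ ≤ ‖cutoff (Ioi 0) (𝓕.symm φ)‖ := by
  calc ‖cutoff (Ioi 0) (𝓕.symm (mulLp g φ))‖
      = ‖cutoff (Ioi 0) (𝓕.symm (mulLp g (𝓕 (cutoff (Ioi 0) (𝓕.symm φ)))))‖ := by
        rw [hgt.cutoff_Ioi_symm_mulLp_fourier_cutoff_Ioi hg h𝓕, 𝓕.apply_symm_apply]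
    _ ≤ ‖mulLp g (𝓕 (cutoff (Ioi 0) (𝓕.symm φ)))‖ :=
        (norm_cutoff_le measurableSet_Ioi _).trans_eq (𝓕.symm.norm_map _)
    _ ≤ ‖cutoff (Ioi 0) (𝓕.symm φ)‖ :=
        (norm_mulLp_le (hgt.memLp_top hg) hgt.norm_le_one _).trans_eq (𝓕.norm_map _)

end HardyExt

/-- If a measurable `g : ℝ → ℂ` has an extension to the closed upper
half-plane, analytic on the open half-plane, bounded by one, with boundary values `g` a.e.,
then `g(M)* P̂₊ g(M) ≤ P̂₊`, i.e. for every `φ ∈ L²(ℝ)`,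
`∫_{[0,∞)} |(F*(g·φ))(y)|² dy ≤ ∫_{[0,∞)} |(F*φ)(y)|² dy`. -/
theorem statement0 (g : ℝ → ℂ) (hg : Measurable g) (gt : ℂ → ℂ) (hgt : HardyExt g gt)
    (𝓕 : H2 ≃ₗᵢ[ℂ] H2) (h𝓕 : IsFourier 𝓕) (φ : H2) :
    ∫ y in Set.Ici (0 : ℝ), ‖(𝓕.symm (mulLp g φ)) y‖ ^ 2 ≤
      ∫ y in Set.Ici (0 : ℝ), ‖(𝓕.symm φ) y‖ ^ 2 := by
  rw [integral_Ici_eq_integral_Ioi, integral_Ici_eq_integral_Ioi,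
    ← norm_cutoff_sq measurableSet_Ioi, ← norm_cutoff_sq measurableSet_Ioi]
  gcongr
  exact hgt.norm_cutoff_Ioi_symm_mulLp_le hg h𝓕 φ
end
end

section
/- Let f ∈ L²(ℝ) vanish almost everywhere on (−∞,0). Define h(ω) := (2π)^{-1/2} ∫_{[0,∞)} e^{iωy} f(y) dy for ω in the open upper half-plane {ω ∈ ℂ : Im ω > 0} (the integral converges absolutely since y ↦ e^{-Im(ω)·y} is square integrable on [0,∞)). Then: (a) h is analytic on {Im ω > 0}; (b) for every b > 0, ∫_ℝ |h(a+ib)|² da ≤ ∫_ℝ |f(y)|² dy; (c) the functions h_b(a) := h(a+ib) converge in L²(ℝ) to F*f as b → 0+. -/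
open MeasureTheory Complex Filter Set
open scoped ENNReal NNReal

noncomputable section

/-!
On the line `Im ω = b` the function `h` is the inverse Fourier transform of the damped function
`y ↦ 1_{[0,∞)}(y) e^{-by} f(y)`, which lies in `L¹ ∩ L²`. By unitarity of `𝓕`, the bound (b) and the
limit (c) become statements about the damped function: it is dominated by `|f|`, and it tends to `f`
in `L²` by dominated convergence. Holomorphy is differentiation under the integral sign; the factor
`y` that the derivative brings down is absorbed by giving up part of the exponential decay.
-/

section DominatedConvergence

variable {α ι E : Type*} [MeasurableSpace α] {μ : Measure α} [NormedAddCommGroup E] {p : ℝ≥0∞}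

lemma tendsto_eLpNorm_zero_of_dominated {l : Filter ι} [l.IsCountablyGenerated] (hp : p ≠ ∞)
    {F : ι → α → E} {g : α → ℝ} (hg : MemLp g p μ)
    (hF : ∀ᶠ i in l, AEStronglyMeasurable (F i) μ)
    (hFg : ∀ᶠ i in l, ∀ᵐ x ∂μ, ‖F i x‖ ≤ g x)
    (hlim : ∀ᵐ x ∂μ, Tendsto (F · x) l (nhds 0)) :
    Tendsto (fun i => eLpNorm (F i) p μ) l (nhds 0) := by
  rcases eq_or_ne p 0 with rfl | hp0
  · simpa using tendsto_const_nhds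
  have hr : 0 < p.toReal := ENNReal.toReal_pos hp0 hp
  have hint : Tendsto (fun i => ∫⁻ x, ‖F i x‖ₑ ^ p.toReal ∂μ) l (nhds (∫⁻ _, 0 ∂μ)) := by
    refine tendsto_lintegral_filter_of_dominated_convergence' (fun x => ‖g x‖ₑ ^ p.toReal)
      ?_ ?_ (lintegral_rpow_enorm_lt_top_of_eLpNorm_lt_top hp0 hp hg.2).ne ?_
    · filter_upwards [hF] with i hi using hi.enorm.pow_const _
    · filter_upwards [hFg] with i hi
      filter_upwards [hi] with x hx
      have hle : ‖F i x‖ₑ ≤ ‖g x‖ₑ :=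
        enorm_le_iff_norm_le.2 (hx.trans (Real.le_norm_self _))
      gcongr
    · filter_upwards [hlim] with x hx
      simpa [hr] using hx.enorm.ennrpow_const p.toReal
  simp only [eLpNorm_eq_lintegral_rpow_enorm_toReal hp0 hp]
  simpa [hr] using hint.ennrpow_const (1 / p.toReal)

end DominatedConvergence

lemma lintegral_enorm_sq_eq_eLpNorm_two_sq {α E : Type*} [MeasurableSpace α] {μ : Measure α}
    [NormedAddCommGroup E] (f : α → E) : ∫⁻ x, ‖f x‖ₑ ^ 2 ∂μ = eLpNorm f 2 μ ^ 2 := by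
  simpa using (eLpNorm_nnreal_pow_eq_lintegral (f := f) (μ := μ) (p := 2) two_ne_zero).symm

section Exponential

lemma exp_neg_mul_le_one {b y : ℝ} (hb : 0 ≤ b) (hy : 0 ≤ y) : Real.exp (-b * y) ≤ 1 :=
  Real.exp_le_one_iff.2 (by nlinarith)

lemma mul_exp_neg_mul_le_inv {c : ℝ} (hc : 0 < c) (y : ℝ) : y * Real.exp (-c * y) ≤ c⁻¹ := by
  rw [← one_div, le_div_iff₀ hc]
  calc y * Real.exp (-c * y) * c = c * y * Real.exp (-(c * y)) := by ring_nf
    _ ≤ Real.exp (-1) := Real.mul_exp_neg_le_exp_neg_one _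
    _ ≤ 1 := Real.exp_le_one_iff.2 (by norm_num)

lemma norm_cexp_I_mul_mul_ofReal (ω : ℂ) (y : ℝ) :
    ‖Complex.exp (I * ω * y)‖ = Real.exp (-ω.im * y) := by
  simp [Complex.norm_exp]

lemma memLp_exp_neg_mul_Ici {b : ℝ} (hb : 0 < b) (q : ℝ≥0∞) :
    MemLp (fun y : ℝ => Real.exp (-b * y)) q (volume.restrict (Ici 0)) := by
  have hmeas : AEStronglyMeasurable (fun y : ℝ => Real.exp (-b * y)) (volume.restrict (Ici 0)) := by
    fun_prop
  rcases eq_or_ne q 0 with rfl | hq0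
  · exact memLp_zero_iff_aestronglyMeasurable.2 hmeas
  rcases eq_or_ne q ∞ with rfl | hq
  · refine memLp_top_of_bound hmeas 1 (ae_restrict_of_forall_mem measurableSet_Ici fun y hy => ?_)
    simpa using exp_neg_mul_le_one hb.le hy
  · rw [← integrable_norm_rpow_iff hmeas hq0 hq]
    have hbq : 0 < b * q.toReal := mul_pos hb (ENNReal.toReal_pos hq0 hq)
    have hint : IntegrableOn (fun y : ℝ => Real.exp (-(b * q.toReal) * y)) (Ici 0) :=
      (integrableOn_Ici_iff_integrableOn_Ioi).2 (exp_neg_integrableOn_Ioi 0 hbq)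
    refine hint.congr (Eventually.of_forall fun y => ?_)
    simp only [Real.norm_eq_abs, Real.abs_exp, ← Real.exp_mul]
    ring_nf

end Exponential

section FourierLaplace

variable {E : Type*} [NormedAddCommGroup E]

lemma integrableOn_exp_neg_mul_smul [NormedSpace ℝ E] {f : ℝ → E} {p : ℝ≥0∞} (hp : 1 ≤ p)
    (hf : MemLp f p (volume.restrict (Ici 0))) {b : ℝ} (hb : 0 < b) :
    IntegrableOn (fun y => Real.exp (-b * y) • f y) (Ici 0) := by
  have : p.HolderConjugate p.conjExponent := .conjExponent hp
  exact memLp_one_iff_integrable.1 (hf.smul (memLp_exp_neg_mul_Ici hb p.conjExponent))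

variable [NormedSpace ℂ E]

/-- The holomorphic Fourier–Laplace transform of the restriction of `f` to `[0, ∞)`, with the
normalization that makes its boundary value on the real line the unitary inverse Fourier
transform. Where the integral diverges it has the value `0`. -/
def fourierLaplace (f : ℝ → E) (ω : ℂ) : E :=
  (Real.sqrt (2 * Real.pi) : ℂ)⁻¹ • ∫ y in Ici (0 : ℝ), Complex.exp (I * ω * y) • f y

lemma norm_deriv_cexp_smul_le {σ c : ℝ} (hc : 0 < c) {ω : ℂ} (hω : σ + c ≤ ω.im) {y : ℝ}
    (hy : 0 ≤ y) (v : E) :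
    ‖(Complex.exp (I * ω * y) * (I * y)) • v‖ ≤ c⁻¹ * ‖Real.exp (-σ * y) • v‖ := by
  calc ‖(Complex.exp (I * ω * y) * (I * y)) • v‖
      = y * Real.exp (-ω.im * y) * ‖v‖ := by
        rw [norm_smul, norm_mul, norm_cexp_I_mul_mul_ofReal]
        simp [abs_of_nonneg hy, mul_comm]
    _ ≤ y * Real.exp (-(σ + c) * y) * ‖v‖ := by gcongr
    _ = y * Real.exp (-c * y) * (Real.exp (-σ * y) * ‖v‖) := by
        rw [neg_add, add_mul, Real.exp_add]; ring
    _ ≤ c⁻¹ * (Real.exp (-σ * y) * ‖v‖) := by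
        gcongr; exact mul_exp_neg_mul_le_inv hc y
    _ = c⁻¹ * ‖Real.exp (-σ * y) • v‖ := by simp [norm_smul]

lemma differentiableAt_fourierLaplace {f : ℝ → E} {σ : ℝ}
    (hf : IntegrableOn (fun y => Real.exp (-σ * y) • f y) (Ici 0)) {ω₀ : ℂ} (hω₀ : σ < ω₀.im) :
    DifferentiableAt ℂ (fourierLaplace f) ω₀ := by
  obtain ⟨c, hc, hcω₀⟩ : ∃ c > 0, σ + c < ω₀.im := ⟨(ω₀.im - σ) / 2, by linarith, by linarith⟩
  have hf_meas : AEStronglyMeasurable f (volume.restrict (Ici 0)) := by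
    have hexp : AEStronglyMeasurable (fun y : ℝ => Real.exp (σ * y)) (volume.restrict (Ici 0)) := by
      fun_prop
    refine (hexp.smul hf.1).congr (Eventually.of_forall fun y => ?_)
    simp [smul_smul, ← Real.exp_add]
  have hF_meas (ω : ℂ) : AEStronglyMeasurable (fun y : ℝ => Complex.exp (I * ω * y) • f y)
      (volume.restrict (Ici 0)) := .smul (by fun_prop) hf_meas
  have hF_int : IntegrableOn (fun y : ℝ => Complex.exp (I * ω₀ * y) • f y) (Ici 0) := by
    refine Integrable.mono hf (hF_meas ω₀)
      (ae_restrict_of_forall_mem measurableSet_Ici fun y (hy : 0 ≤ y) => ?_)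
    rw [norm_smul, norm_smul, norm_cexp_I_mul_mul_ofReal, Real.norm_eq_abs, Real.abs_exp]
    gcongr
  have hderiv (y : ℝ) (ω : ℂ) : HasDerivAt (fun ω : ℂ => Complex.exp (I * ω * y) • f y)
      ((Complex.exp (I * ω * y) * (I * y)) • f y) ω := by
    have hlin : HasDerivAt (fun ω : ℂ => I * ω * y) (I * y) ω := by
      simpa using ((hasDerivAt_id ω).const_mul I).mul_const (y : ℂ)
    exact hlin.cexp.smul_const (f y)
  have hnhds : {ω : ℂ | σ + c < ω.im} ∈ nhds ω₀ :=
    (isOpen_lt continuous_const continuous_im).mem_nhds hcω₀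
  exact (hasDerivAt_integral_of_dominated_loc_of_deriv_le hnhds
    (Eventually.of_forall hF_meas) hF_int (.smul (by fun_prop) hf_meas)
    (ae_restrict_of_forall_mem measurableSet_Ici fun y hy ω hω =>
      norm_deriv_cexp_smul_le hc (le_of_lt hω) hy (f y))
    (hf.norm.const_mul c⁻¹)
    (Eventually.of_forall fun y ω _ => hderiv y ω)).2.differentiableAt.const_smul _

lemma differentiableOn_fourierLaplace {f : ℝ → E} {p : ℝ≥0∞} (hp : 1 ≤ p)
    (hf : MemLp f p (volume.restrict (Ici 0))) :
    DifferentiableOn ℂ (fourierLaplace f) {ω : ℂ | 0 < ω.im} := fun ω hω =>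
  have hω : 0 < ω.im := hω
  (differentiableAt_fourierLaplace (integrableOn_exp_neg_mul_smul hp hf (half_pos hω))
    (half_lt_self hω)).differentiableWithinAt

end FourierLaplace

section DampedCutoff

variable {E : Type*} [NormedAddCommGroup E]

/-- The function `y ↦ e^{-by} f(y)` on `[0, ∞)`, extended by zero. For `b > 0` it is integrable when
`f` is in `L²`, and the inverse Fourier transform of it is the restriction of `fourierLaplace f`
to the line `Im ω = b`. -/
def dampedCutoff [NormedSpace ℝ E] (b : ℝ) (f : ℝ → E) : ℝ → E :=
  (Ici 0).indicator fun y => Real.exp (-b * y) • f y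

lemma fourierLaplace_add_mul_I [NormedSpace ℂ E] (f : ℝ → E) (a b : ℝ) :
    fourierLaplace f (a + b * I) = (Real.sqrt (2 * Real.pi) : ℂ)⁻¹ •
      ∫ x : ℝ, Complex.exp (I * a * x) • dampedCutoff b f x := by
  have hexp (x : ℝ) : Complex.exp (I * (a + b * I) * x) =
      Complex.exp (I * a * x) * Real.exp (-b * x) := by
    rw [Complex.ofReal_exp, ← Complex.exp_add]
    congr 1
    push_cast
    linear_combination (b * x : ℂ) * I_mul_I
  rw [fourierLaplace, ← integral_indicator measurableSet_Ici]
  congr 2 with x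
  by_cases hx : x ∈ Ici 0
  · rw [dampedCutoff, indicator_of_mem hx, indicator_of_mem hx, hexp, mul_smul, Complex.coe_smul]
  · simp [dampedCutoff, hx]

variable [NormedSpace ℝ E] {f : ℝ → E} {b : ℝ} {p : ℝ≥0∞} {μ : Measure ℝ}

lemma norm_dampedCutoff_le (hb : 0 ≤ b) (f : ℝ → E) (y : ℝ) : ‖dampedCutoff b f y‖ ≤ ‖f y‖ := by
  by_cases hy : y ∈ Ici 0
  · rw [dampedCutoff, indicator_of_mem hy, norm_smul, Real.norm_eq_abs, Real.abs_exp]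
    exact mul_le_of_le_one_left (norm_nonneg _) (exp_neg_mul_le_one hb hy)
  · simp [dampedCutoff, hy]

lemma norm_dampedCutoff_sub_indicator_le (hb : 0 ≤ b) (f : ℝ → E) (y : ℝ) :
    ‖dampedCutoff b f y - (Ici 0).indicator f y‖ ≤ ‖f y‖ := by
  by_cases hy : y ∈ Ici 0
  · have hexp : ‖Real.exp (-b * y) - 1‖ ≤ 1 := by
      rw [Real.norm_eq_abs, abs_le]
      constructor <;> linarith [Real.exp_pos (-b * y), exp_neg_mul_le_one hb hy]
    calc ‖dampedCutoff b f y - (Ici 0).indicator f y‖ = ‖Real.exp (-b * y) - 1‖ * ‖f y‖ := by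
          rw [dampedCutoff, indicator_of_mem hy, indicator_of_mem hy, ← norm_smul, sub_smul,
            one_smul]
      _ ≤ ‖f y‖ := mul_le_of_le_one_left (norm_nonneg _) hexp
  · simp [dampedCutoff, hy]

lemma tendsto_dampedCutoff (f : ℝ → E) (y : ℝ) :
    Tendsto (fun b => dampedCutoff b f y) (nhds 0) (nhds ((Ici 0).indicator f y)) := by
  by_cases hy : y ∈ Ici 0
  · have hcont : Continuous fun b : ℝ => Real.exp (-b * y) • f y := by fun_prop
    simpa [dampedCutoff, hy] using hcont.tendsto 0
  · simp [dampedCutoff, hy]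

lemma aestronglyMeasurable_dampedCutoff (hf : AEStronglyMeasurable f μ) (b : ℝ) :
    AEStronglyMeasurable (dampedCutoff b f) μ :=
  (AEStronglyMeasurable.smul (by fun_prop) hf).indicator measurableSet_Ici

lemma memLp_dampedCutoff (hb : 0 ≤ b) (hf : MemLp f p μ) : MemLp (dampedCutoff b f) p μ :=
  hf.mono (aestronglyMeasurable_dampedCutoff hf.1 b)
    (Eventually.of_forall (norm_dampedCutoff_le hb f))

lemma integrable_dampedCutoff (hp : 1 ≤ p) (hf : MemLp f p (volume.restrict (Ici 0)))
    (hb : 0 < b) : Integrable (dampedCutoff b f) :=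
  (integrable_indicator_iff measurableSet_Ici).2 (integrableOn_exp_neg_mul_smul hp hf hb)

lemma tendsto_eLpNorm_dampedCutoff_sub_indicator (hp : p ≠ ∞) (hf : MemLp f p μ) :
    Tendsto (fun b => eLpNorm (dampedCutoff b f - (Ici 0).indicator f) p μ)
      (nhdsWithin 0 (Ioi 0)) (nhds 0) := by
  refine tendsto_eLpNorm_zero_of_dominated hp hf.norm ?_ ?_ ?_
  · exact Eventually.of_forall fun b =>
      (aestronglyMeasurable_dampedCutoff hf.1 b).sub (hf.1.indicator measurableSet_Ici)
  · filter_upwards [self_mem_nhdsWithin] with b hb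
    exact Eventually.of_forall (norm_dampedCutoff_sub_indicator_le (le_of_lt hb) f)
  · refine Eventually.of_forall fun y => ?_
    simpa using ((tendsto_dampedCutoff f y).mono_left nhdsWithin_le_nhds).sub_const
      ((Ici 0).indicator f y)

end DampedCutoff

namespace IsFourier

variable {𝓕 : H2 ≃ₗᵢ[ℂ] H2} {f : ℝ → ℂ} {b : ℝ}

lemma symm_toLp_ae_eq (h𝓕 : IsFourier 𝓕) {g : ℝ → ℂ} (hg : MemLp g 2 volume)
    (hg_int : Integrable g) :
    𝓕.symm (hg.toLp g) =ᵐ[volume] fun y : ℝ => (Real.sqrt (2 * Real.pi) : ℂ)⁻¹ *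
      ∫ x : ℝ, Complex.exp (I * y * x) * g x := by
  filter_upwards [h𝓕.2 _ (hg_int.congr hg.coeFn_toLp.symm)] with y hy
  rw [hy]
  congr 1
  refine integral_congr_ae ?_
  filter_upwards [hg.coeFn_toLp] with x hx
  rw [hx]

lemma fourierLaplace_ae_eq (h𝓕 : IsFourier 𝓕) (hf : MemLp f 2 volume) (hb : 0 < b) :
    (fun a : ℝ => fourierLaplace f (a + b * I)) =ᵐ[volume]
      𝓕.symm ((memLp_dampedCutoff hb.le hf).toLp _) := by
  simp only [fourierLaplace_add_mul_I]
  exact (h𝓕.symm_toLp_ae_eq _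
    (integrable_dampedCutoff one_le_two (hf.restrict _) hb)).symm

lemma eLpNorm_fourierLaplace_le (h𝓕 : IsFourier 𝓕) (hf : MemLp f 2 volume) (hb : 0 < b) :
    eLpNorm (fun a : ℝ => fourierLaplace f (a + b * I)) 2 volume ≤ eLpNorm f 2 volume := by
  rw [eLpNorm_congr_ae (h𝓕.fourierLaplace_ae_eq hf hb), ← Lp.enorm_def,
    LinearIsometryEquiv.enorm_map, Lp.enorm_toLp]
  exact eLpNorm_mono (norm_dampedCutoff_le hb.le f)

lemma eLpNorm_fourierLaplace_sub_symm_toLp (h𝓕 : IsFourier 𝓕) {g : ℝ → ℂ}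
    (hf : MemLp f 2 volume) (hg : MemLp g 2 volume) (hb : 0 < b) :
    eLpNorm (fun a : ℝ => fourierLaplace f (a + b * I) - 𝓕.symm (hg.toLp g) a) 2 volume =
      eLpNorm (dampedCutoff b f - g) 2 volume := by
  set φ := (memLp_dampedCutoff hb.le hf).toLp (dampedCutoff b f)
  calc eLpNorm (fun a : ℝ => fourierLaplace f (a + b * I) - 𝓕.symm (hg.toLp g) a) 2 volume
      = eLpNorm (⇑(𝓕.symm φ) - ⇑(𝓕.symm (hg.toLp g))) 2 volume :=
        eLpNorm_congr_ae ((h𝓕.fourierLaplace_ae_eq hf hb).sub .rfl)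
    _ = edist φ (hg.toLp g) := by rw [← Lp.edist_def, LinearIsometryEquiv.edist_map]
    _ = eLpNorm (dampedCutoff b f - g) 2 volume := Lp.edist_toLp_toLp _ _ _ _

lemma tendsto_eLpNorm_fourierLaplace_sub (h𝓕 : IsFourier 𝓕) (hf : MemLp f 2 volume) :
    Tendsto (fun b : ℝ => eLpNorm (fun a : ℝ => fourierLaplace f (a + b * I) -
        𝓕.symm ((hf.indicator measurableSet_Ici).toLp ((Ici 0).indicator f)) a) 2 volume)
      (nhdsWithin 0 (Ioi 0)) (nhds 0) := by
  refine (tendsto_eLpNorm_dampedCutoff_sub_indicator ENNReal.ofNat_ne_top hf).congr' ?_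
  filter_upwards [self_mem_nhdsWithin] with b hb
  exact (h𝓕.eLpNorm_fourierLaplace_sub_symm_toLp hf _ hb).symm

end IsFourier

/-- For `f ∈ L²(ℝ)` vanishing a.e. on `(-∞,0)`, the function
`h(ω) := (2π)^{-1/2} ∫_{[0,∞)} e^{iωy} f(y) dy` on the open upper half-plane is
(a) analytic there; (b) satisfies `∫ |h(a+ib)|² da ≤ ∫ |f|²` for every `b > 0`; and
(c) the boundary functions `a ↦ h(a+ib)` converge to `F*f` in `L²(ℝ)` as `b → 0+`. -/
theorem statement3 (𝓕 : H2 ≃ₗᵢ[ℂ] H2) (h𝓕 : IsFourier 𝓕) (f : H2)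
    (hf : ∀ᵐ y ∂(volume.restrict (Set.Iio (0 : ℝ))), f y = 0)
    (h : ℂ → ℂ)
    (hh : ∀ ω : ℂ, 0 < ω.im →
      h ω = (Real.sqrt (2 * Real.pi) : ℂ)⁻¹ *
        ∫ y in Set.Ici (0 : ℝ), Complex.exp (Complex.I * ω * y) * f y) :
    DifferentiableOn ℂ h {ω : ℂ | 0 < ω.im} ∧
    (∀ b : ℝ, 0 < b →
      (∫⁻ a : ℝ, (‖h ((a : ℂ) + (b : ℂ) * Complex.I)‖₊ : ℝ≥0∞) ^ 2) ≤
        ∫⁻ y : ℝ, (‖f y‖₊ : ℝ≥0∞) ^ 2) ∧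
    Tendsto (fun b : ℝ =>
        eLpNorm (fun a : ℝ => h ((a : ℂ) + (b : ℂ) * Complex.I) - (𝓕.symm f) a) 2 volume)
      (nhdsWithin 0 (Set.Ioi 0)) (nhds 0) := by
  have hline {b : ℝ} (hb : 0 < b) (a : ℝ) : h (a + b * I) = fourierLaplace f (a + b * I) :=
    hh _ (by simpa using hb)
  have hcutoff : ((Lp.memLp f).indicator measurableSet_Ici).toLp ((Ici 0).indicator f) = f := by
    refine Lp.ext ((MemLp.coeFn_toLp _).trans ?_)
    exact indicator_ae_eq_of_restrict_compl_ae_eq_zero measurableSet_Ici (by rwa [compl_Ici])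
  refine ⟨(differentiableOn_fourierLaplace one_le_two ((Lp.memLp f).restrict _)).congr hh,
    fun b hb => ?_, ?_⟩
  · simp only [hline hb, ← enorm_eq_nnnorm, lintegral_enorm_sq_eq_eLpNorm_two_sq]
    gcongr
    exact h𝓕.eLpNorm_fourierLaplace_le (Lp.memLp f) hb
  · have hlim := h𝓕.tendsto_eLpNorm_fourierLaplace_sub (Lp.memLp f)
    rw [hcutoff] at hlim
    refine hlim.congr' ?_
    filter_upwards [self_mem_nhdsWithin] with b hb
    simp only [hline hb]
end
end
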